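/- Let f : V → [0,∞], let A : V → W be a bounded linear operator between separable real Hilbert spaces with ⟨A*Ax,x⟩ ≤ γ‖x‖² for all x ∈ V (for some γ > 0), let d ∈ W, and define 𝒥(x) = f(x) + ½‖Ax−d‖²_W and 𝒥_γ(x) = S_γ²(f)(x) + ½‖Ax−d‖²_W. Then CE(𝒥) ≤ 𝒥_γ ≤ 𝒥 pointwise, where CE(𝒥) is the lower semicontinuous convex envelope of 𝒥. -/

import Mathlib

open scoped InnerProductSpace RealInnerProductSpace ENNReal Topology
open Filter

noncomputable section

/-- The S-transform `S_γ(f)(y) = sup_x ( -f(x) - (γ/2)‖x-y‖² )` for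
extended-real-valued functions on a real inner product space. -/
def SgammaE {V : Type*} [NormedAddCommGroup V] [InnerProductSpace ℝ V]
    (γ : ℝ) (f : V → EReal) (y : V) : EReal :=
  ⨆ x : V, (-(f x) - (((γ / 2) * ‖x - y‖ ^ 2 : ℝ) : EReal))

/-- The S-transform of a `[0,∞]`-valued function. -/
def Sgamma {V : Type*} [NormedAddCommGroup V] [InnerProductSpace ℝ V]
    (γ : ℝ) (f : V → ℝ≥0∞) (y : V) : EReal :=
  SgammaE γ (fun x => (f x : EReal)) y

/-- The twice iterated S-transform `S_γ²(f) = S_γ(S_γ(f))`. -/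
def Sgamma2 {V : Type*} [NormedAddCommGroup V] [InnerProductSpace ℝ V]
    (γ : ℝ) (f : V → ℝ≥0∞) : V → EReal :=
  SgammaE γ (Sgamma γ f)

/-- Convexity for extended-real-valued functions. -/
def EConvexOn {V : Type*} [NormedAddCommGroup V] [InnerProductSpace ℝ V]
    (h : V → EReal) : Prop :=
  ∀ x y : V, ∀ a b : ℝ, 0 ≤ a → 0 ≤ b → a + b = 1 →
    h (a • x + b • y) ≤ (a : EReal) * h x + (b : EReal) * h y

/-- The lower semicontinuous convex envelope of `g`: the (pointwise) supremum of all l.s.c.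
convex functions below `g`, which is the largest such function. -/
def lscConvexEnvelope {V : Type*} [NormedAddCommGroup V] [InnerProductSpace ℝ V]
    (g : V → EReal) (x : V) : EReal :=
  ⨆ h : {h : V → EReal // LowerSemicontinuous h ∧ EConvexOn h ∧ ∀ x, h x ≤ g x}, h.1 x

/-- A lower semicontinuous convex function `h` is approximated from below, at any point `x`, by
continuous affine functions that minorize the positive part of `h`. -/
theorem exists_affine_le_of_lt {V : Type*} [NormedAddCommGroup V] [InnerProductSpace ℝ V]
    {h : V → EReal} (hlsc : LowerSemicontinuous h) (hconv : EConvexOn h) {x : V} {c : ℝ}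
    (hc : (c : EReal) < h x) :
    ∃ (φ : V →L[ℝ] ℝ) (b : ℝ), (∀ (z : V) (t : ℝ), h z ≤ t → 0 ≤ t → φ z + b ≤ t) ∧
      c ≤ φ x + b := by
  set E : Set (V × ℝ) := {p | h p.1 ≤ (p.2 : EReal) ∧ 0 ≤ p.2} with hE
  have hEclosed : IsClosed E := by
    refine IsClosed.inter ?_ (isClosed_le continuous_const continuous_snd)
    exact hlsc.isClosed_epigraph.preimage
      (continuous_fst.prodMk (continuous_coe_real_ereal.comp continuous_snd))
  have hEconvex : Convex ℝ E := by
    rintro ⟨z, s⟩ ⟨hz, hs⟩ ⟨w, t⟩ ⟨hw, ht⟩ a b ha hb hab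
    refine ⟨(hconv z w a b ha hb hab).trans ?_, ?_⟩
    · have h₁ : (a : EReal) * h z ≤ a * s :=
        mul_le_mul_of_nonneg_left hz (EReal.coe_nonneg.2 ha)
      have h₂ : (b : EReal) * h w ≤ b * t :=
        mul_le_mul_of_nonneg_left hw (EReal.coe_nonneg.2 hb)
      simpa using add_le_add h₁ h₂
    · simp only [Prod.smul_mk, Prod.mk_add_mk, smul_eq_mul] at *
      positivity
  have hxE : (x, c) ∉ E := fun hmem => hc.not_ge hmem.1
  obtain hempty | ⟨⟨z₀, t₀⟩, hz₀, ht₀⟩ := E.eq_empty_or_nonempty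
  · refine ⟨0, c, fun z t hz ht => ?_, by simp⟩
    have hmem : (z, t) ∈ E := ⟨hz, ht⟩
    simp [hempty] at hmem
  obtain ⟨ψ, u, hxu, hu⟩ := geometric_hahn_banach_point_closed hEconvex hEclosed hxE
  set φ : V →L[ℝ] ℝ := ψ.comp (ContinuousLinearMap.inl ℝ V ℝ) with hφ
  set β : ℝ := ψ (0, 1) with hβ
  have hψ (z : V) (t : ℝ) : ψ (z, t) = φ z + β * t := by
    have hsplit : (z, t) = (z, (0 : ℝ)) + t • ((0 : V), (1 : ℝ)) := by simp
    rw [hsplit, map_add, map_smul]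
    simp [hφ, hβ, mul_comm]
  rw [hψ] at hxu
  have hsep (z : V) (t : ℝ) (hz : h z ≤ t) (ht : 0 ≤ t) : u < φ z + β * t := by
    rw [← hψ]
    exact hu _ ⟨hz, ht⟩
  have hβ0 : 0 ≤ β := by
    by_contra! hneg
    have hs : 0 ≤ |φ z₀ - u| / (-β) := div_nonneg (abs_nonneg _) (by linarith)
    have hlt := hsep z₀ (t₀ + |φ z₀ - u| / (-β))
      (hz₀.trans (EReal.coe_le_coe_iff.2 (by linarith))) (add_nonneg ht₀ hs)
    have hcancel : β * (|φ z₀ - u| / (-β)) = -|φ z₀ - u| := by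
      rw [div_neg, mul_neg, mul_div_cancel₀ _ hneg.ne]
    have hprod : β * t₀ ≤ 0 := mul_nonpos_of_nonpos_of_nonneg hneg.le ht₀
    rw [mul_add, hcancel] at hlt
    linarith [le_abs_self (φ z₀ - u)]
  obtain hzero | hpos := hβ0.eq_or_lt
  · rw [← hzero] at hxu hsep
    have hgap : 0 < u - φ x := by linarith
    set N : ℝ := max c 0 / (u - φ x) with hN
    have hN0 : 0 ≤ N := by positivity
    refine ⟨-(N • φ), N * u, fun z t hz ht => ?_, ?_⟩
    · have hlt := hsep z t hz ht
      have : 0 ≤ N * (φ z - u) := mul_nonneg hN0 (by linarith)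
      simp only [neg_apply, smul_apply, smul_eq_mul]
      linarith
    · have hval : N * (u - φ x) = max c 0 := div_mul_cancel₀ _ hgap.ne'
      simp only [neg_apply, smul_apply, smul_eq_mul]
      linarith [le_max_left c 0]
  · refine ⟨-(β⁻¹ • φ), β⁻¹ * u, fun z t hz ht => ?_, ?_⟩
    · have hlt := mul_lt_mul_of_pos_left (hsep z t hz ht) (inv_pos.2 hpos)
      rw [mul_add, inv_mul_cancel_left₀ hpos.ne'] at hlt
      simp only [neg_apply, smul_apply, smul_eq_mul]
      linarith
    · have hlt := mul_lt_mul_of_pos_left hxu (inv_pos.2 hpos)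
      rw [mul_add, inv_mul_cancel_left₀ hpos.ne'] at hlt
      simp only [neg_apply, smul_apply, smul_eq_mul]
      linarith

/-- The twice iterated S-transform of `f` lies below `f`. -/
theorem Sgamma2_le {V : Type*} [NormedAddCommGroup V] [InnerProductSpace ℝ V]
    (γ : ℝ) (f : V → ℝ≥0∞) (x : V) : Sgamma2 γ f x ≤ (f x : EReal) := by
  refine iSup_le fun y => ?_
  have hle : -(f x : EReal) - ((γ / 2 * ‖x - y‖ ^ 2 : ℝ) : EReal) ≤ Sgamma γ f y :=
    le_iSup (fun z : V => -(f z : EReal) - ((γ / 2 * ‖z - y‖ ^ 2 : ℝ) : EReal)) x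
  rw [norm_sub_rev] at hle
  refine EReal.sub_le_of_le_add ?_
  have hneg := EReal.neg_le_neg_iff.2 hle
  rwa [EReal.neg_sub (Or.inr (EReal.coe_ne_bot _)) (Or.inr (EReal.coe_ne_top _)), neg_neg] at hneg

/-- A paraboloid of curvature `-γ` lying below `f` lies below the twice iterated S-transform. -/
theorem le_Sgamma2_of_forall_le {V : Type*} [NormedAddCommGroup V] [InnerProductSpace ℝ V]
    {γ : ℝ} {f : V → ℝ≥0∞} {c : ℝ} {y : V}
    (hf : ∀ z, ((c - γ / 2 * ‖z - y‖ ^ 2 : ℝ) : EReal) ≤ f z) (x : V) :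
    ((c - γ / 2 * ‖x - y‖ ^ 2 : ℝ) : EReal) ≤ Sgamma2 γ f x := by
  have hS : Sgamma γ f y ≤ ((-c : ℝ) : EReal) := by
    refine iSup_le fun z => EReal.sub_le_of_le_add ?_
    have hneg := EReal.neg_le_neg_iff.2 (hf z)
    rw [← EReal.coe_neg, neg_sub, sub_eq_add_neg, add_comm, EReal.coe_add] at hneg
    exact hneg
  have hle : -(Sgamma γ f y) - ((γ / 2 * ‖y - x‖ ^ 2 : ℝ) : EReal) ≤ Sgamma2 γ f x :=
    le_iSup (fun w : V => -(Sgamma γ f w) - ((γ / 2 * ‖w - x‖ ^ 2 : ℝ) : EReal)) y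
  refine le_trans ?_ hle
  rw [norm_sub_rev, EReal.coe_sub]
  refine EReal.sub_le_sub ?_ le_rfl
  simpa using EReal.neg_le_neg_iff.2 hS

/-- An affine function minus `½‖A · - d‖²` with `‖A z‖² ≤ γ‖z‖²` has at each point `x` a touching
paraboloid of curvature `-γ` from below. -/
theorem exists_paraboloid_le {V W : Type*}
    [NormedAddCommGroup V] [InnerProductSpace ℝ V] [CompleteSpace V]
    [NormedAddCommGroup W] [InnerProductSpace ℝ W] [CompleteSpace W]
    {A : V →L[ℝ] W} (d : W) {γ : ℝ} (hγ : 0 < γ) (hA : ∀ x, ‖A x‖ ^ 2 ≤ γ * ‖x‖ ^ 2)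
    (φ : V →L[ℝ] ℝ) (b : ℝ) (x : V) :
    ∃ (c : ℝ) (y : V),
      (∀ z, c - γ / 2 * ‖z - y‖ ^ 2 ≤ φ z + b - 1 / 2 * ‖A z - d‖ ^ 2) ∧
      c - γ / 2 * ‖x - y‖ ^ 2 = φ x + b - 1 / 2 * ‖A x - d‖ ^ 2 := by
  set g : V := (InnerProductSpace.toDual ℝ V).symm φ -
    ContinuousLinearMap.adjoint A (A x - d) with hg
  have hgz (w : V) : ⟪w, g⟫_ℝ = φ w - ⟪A w, A x - d⟫_ℝ := by
    rw [hg, inner_sub_right, ContinuousLinearMap.adjoint_inner_right, real_inner_comm,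
      InnerProductSpace.toDual_symm_apply]
  have hpar (z : V) : γ / 2 * ‖z - (x + γ⁻¹ • g)‖ ^ 2 =
      γ / 2 * ‖z - x‖ ^ 2 - ⟪z - x, g⟫_ℝ + γ⁻¹ / 2 * ‖g‖ ^ 2 := by
    rw [← sub_sub, norm_sub_sq_real, norm_smul, inner_smul_right, mul_pow, Real.norm_eq_abs,
      sq_abs]
    field_simp
  refine ⟨φ x + b - 1 / 2 * ‖A x - d‖ ^ 2 + γ⁻¹ / 2 * ‖g‖ ^ 2, x + γ⁻¹ • g, fun z => ?_, ?_⟩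
  · have hexp : ‖A z - d‖ ^ 2 =
        ‖A (z - x)‖ ^ 2 + 2 * ⟪A (z - x), A x - d⟫_ℝ + ‖A x - d‖ ^ 2 := by
      rw [← norm_add_sq_real, map_sub, sub_add_sub_cancel]
    rw [hpar, hgz, hexp, map_sub φ]
    linarith [hA (z - x)]
  · rw [hpar]
    simp

/-- case `A*A ≤ γI`. If `⟨A*Ax,x⟩ ≤ γ‖x‖²` for all `x`, then
`CE(𝒥) ≤ 𝒥_γ ≤ 𝒥` pointwise, where `𝒥(x) = f(x) + ½‖Ax-d‖²` and
`𝒥_γ(x) = S_γ²(f)(x) + ½‖Ax-d‖²`. -/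
theorem statement16 {V W : Type*}
    [NormedAddCommGroup V] [InnerProductSpace ℝ V] [CompleteSpace V]
    [TopologicalSpace.SeparableSpace V]
    [NormedAddCommGroup W] [InnerProductSpace ℝ W] [CompleteSpace W]
    [TopologicalSpace.SeparableSpace W]
    (f : V → ℝ≥0∞) (A : V →L[ℝ] W) (d : W) (γ : ℝ) (hγ : 0 < γ)
    (hA : ∀ x : V, ⟪(ContinuousLinearMap.adjoint A) (A x), x⟫_ℝ ≤ γ * ‖x‖ ^ 2) :
    ∀ x : V,
      lscConvexEnvelope (fun z => (f z : EReal) + ((1 / 2 * ‖A z - d‖ ^ 2 : ℝ) : EReal)) x ≤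
        Sgamma2 γ f x + ((1 / 2 * ‖A x - d‖ ^ 2 : ℝ) : EReal) ∧
      Sgamma2 γ f x + ((1 / 2 * ‖A x - d‖ ^ 2 : ℝ) : EReal) ≤
        (f x : EReal) + ((1 / 2 * ‖A x - d‖ ^ 2 : ℝ) : EReal) := by
  have hA' (x : V) : ‖A x‖ ^ 2 ≤ γ * ‖x‖ ^ 2 := by
    simpa [ContinuousLinearMap.adjoint_inner_left] using hA x
  refine fun x => ⟨iSup_le ?_, add_le_add (Sgamma2_le γ f x) le_rfl⟩
  rintro ⟨h, hlsc, hconv, hle⟩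
  refine EReal.ge_of_forall_gt_iff_ge.1 fun c hc => ?_
  obtain ⟨φ, b, hmin, hcx⟩ := exists_affine_le_of_lt hlsc hconv hc
  obtain ⟨e, y, hpar, htouch⟩ := exists_paraboloid_le d hγ hA' φ b x
  have hf (z : V) : ((e - γ / 2 * ‖z - y‖ ^ 2 : ℝ) : EReal) ≤ f z := by
    by_cases htop : f z = ⊤
    · simp [htop]
    have hfz : (f z : EReal) = (((f z).toReal : ℝ) : EReal) :=
      (EReal.coe_ennreal_toReal htop).symm
    have hz := hle z
    simp only [hfz, ← EReal.coe_add] at hz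
    rw [hfz, EReal.coe_le_coe_iff]
    linarith [hmin z _ hz (by positivity), hpar z]
  calc (c : EReal) ≤ ((e - γ / 2 * ‖x - y‖ ^ 2 + 1 / 2 * ‖A x - d‖ ^ 2 : ℝ) : EReal) :=
        EReal.coe_le_coe_iff.2 (by linarith)
    _ ≤ Sgamma2 γ f x + ((1 / 2 * ‖A x - d‖ ^ 2 : ℝ) : EReal) := by
        rw [EReal.coe_add]
        exact add_le_add (le_Sgamma2_of_forall_le hf x) le_rfl
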